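/- Let 1 ≤ p < 2 ≤ s < p' ≤ ∞, where p' is the conjugate exponent of p. There is an absolute constant c₀ such that for every n ∈ ℕ there exists a bounded linear operator T : ℓ_∞^{m} → ℓ_2^n with m = ⌊n^{s/2}⌋ and π_{p,1}(T) > 0 satisfying π_p^k(T) ≤ c₀ · √s · (k / n^{s/2})^{1/s − 1/p'} · π_{p,1}(T) for all k ∈ ℕ. -/

import Mathlib

open scoped ENNReal NNReal BigOperators

noncomputable section

/-- The `ℓ_p`-sum `(∑ i, f i ^ p) ^ (1/p)` of a finite family in `ℝ≥0∞`,
with the usual sup-modification for `p = ∞`. -/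
def eSum (p : ℝ≥0∞) {ι : Type*} [Fintype ι] (f : ι → ℝ≥0∞) : ℝ≥0∞ :=
  if p = ∞ then ⨆ i, f i else (∑ i, f i ^ p.toReal) ^ (1 / p.toReal)

/-- The weak `ℓ_q`-norm of a finite family of vectors:
`sup { (∑ k |⟨x_k, x*⟩|^q)^(1/q) : x* in the unit ball of the dual }`. -/
def weakLq (q : ℝ≥0∞) {X : Type*} [NormedAddCommGroup X] [NormedSpace ℝ X]
    {n : ℕ} (x : Fin n → X) : ℝ≥0∞ :=
  ⨆ f : {f : X →L[ℝ] ℝ // ‖f‖ ≤ 1}, eSum q fun k => ENNReal.ofReal |f.1 (x k)|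

/-- The `(p,q)`-summing norm of `T` with respect to `n` vectors. -/
def piN (p q : ℝ≥0∞) {X Y : Type*} [NormedAddCommGroup X] [NormedSpace ℝ X]
    [NormedAddCommGroup Y] [NormedSpace ℝ Y] (n : ℕ) (T : X →L[ℝ] Y) : ℝ≥0∞ :=
  ⨆ x : {x : Fin n → X // weakLq q x ≤ 1}, eSum p fun k => ENNReal.ofReal ‖T (x.1 k)‖

/-- The `(p,q)`-summing norm of `T`. -/
def piPQ (p q : ℝ≥0∞) {X Y : Type*} [NormedAddCommGroup X] [NormedSpace ℝ X]
    [NormedAddCommGroup Y] [NormedSpace ℝ Y] (T : X →L[ℝ] Y) : ℝ≥0∞ :=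
  ⨆ n : ℕ, piN p q n T

/-- `T` has rank at most `n`: its range is a finite-dimensional subspace of
dimension at most `n`. -/
def RankLE {X Y : Type*} [NormedAddCommGroup X] [NormedSpace ℝ X]
    [NormedAddCommGroup Y] [NormedSpace ℝ Y] (T : X →L[ℝ] Y) (n : ℕ) : Prop :=
  FiniteDimensional ℝ (LinearMap.range (T : X →ₗ[ℝ] Y)) ∧
    Module.finrank ℝ (LinearMap.range (T : X →ₗ[ℝ] Y)) ≤ n

/-- The average of `‖∑ k, ε k • x k‖²` over all `2^n` sign choices `ε ∈ {-1,1}^n`. -/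
def radAvg {X : Type*} [NormedAddCommGroup X] [NormedSpace ℝ X] {n : ℕ}
    (x : Fin n → X) : ℝ :=
  (∑ ε : Fin n → Bool, ‖∑ k, (if ε k then (1 : ℝ) else -1) • x k‖ ^ 2) / 2 ^ n

/-- The Rademacher cotype `q` constant of `T` with respect to `n` vectors. -/
def cotypeN (q : ℝ) {X Y : Type*} [NormedAddCommGroup X] [NormedSpace ℝ X]
    [NormedAddCommGroup Y] [NormedSpace ℝ Y] (n : ℕ) (T : X →L[ℝ] Y) : ℝ≥0∞ :=
  ⨆ x : {x : Fin n → X // Real.sqrt (radAvg x) ≤ 1},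
    (∑ k, ENNReal.ofReal ‖T (x.1 k)‖ ^ q) ^ (1 / q)

/-- The Rademacher cotype `q` constant of `T`. -/
def cotype (q : ℝ) {X Y : Type*} [NormedAddCommGroup X] [NormedSpace ℝ X]
    [NormedAddCommGroup Y] [NormedSpace ℝ Y] (T : X →L[ℝ] Y) : ℝ≥0∞ :=
  ⨆ n : ℕ, cotypeN q n T

/-!
The operator sends the unit vectors of `ℓ_∞^m`, `m = ⌊n ^ (s / 2)⌋`, to independent random sign
vectors in `ℝ ^ n`. For a fixed unit vector `u`, the inner products `y j` of these sign vectors with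
`u` are sub-Gaussian; the powers `|y j| ^ s` lack good exponential moments, but suitable multiples
of them capped at `y j ^ 2 / 8` have them. Since `m ≤ n ^ (s / 2)`, a union bound over a `1 / 2`-net
of the Euclidean ball, whose size is exponential in `n`, shows that some choice of the signs makes
the `ℓ_s` norm of `y` at most `5 √(s n)` for all `u` in the net: the cap is harmless, because once
it is active at some coordinate, the `ℓ_s` norm of `y` is at most of order `√n`. Hölder's inequality
turns this into `‖T x‖ ≤ 10 √(s n) ‖x‖_r`, with `r` conjugate to `s`.

A family of `k` vectors with weak `ℓ_p` norm at most one has, in each of the `m` coordinates, `ℓ_r`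
norm at most one, whence `π_p^k(T) ≤ 10 √(s n) k ^ (1 / p - 1 / r) m ^ (1 / r)`. On the other hand,
the images of the unit vectors all have norm `√n`, so `π_{p,1}(T) ≥ m ^ (1 / p) √n`.
-/

section Rademacher

open Real Finset MeasureTheory ProbabilityTheory
open scoped RealInnerProductSpace

/-- The Euclidean vector whose coordinates are the signs `ε`. For uniformly random `ε`, its inner
product with a fixed vector `u` is the Rademacher sum with coefficients `u`. -/
def signVec {κ : Type*} (ε : κ → ℤˣ) : EuclideanSpace ℝ κ :=
  WithLp.toLp 2 fun i => ((ε i : ℤ) : ℝ)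

lemma expect_prod_pi {ι α : Type*} [Fintype ι] [DecidableEq ι] [Fintype α] (f : ι → α → ℝ) :
    𝔼 a : ι → α, ∏ i, f i (a i) = ∏ i, 𝔼 b, f i b := by
  simp only [Fintype.expect_eq_sum_div_card, prod_div_distrib, prod_const, card_univ,
    prod_univ_sum, Fintype.piFinset_univ, Fintype.card_fun, Nat.cast_pow]

variable {κ : Type*} [Fintype κ]

lemma norm_signVec (ε : κ → ℤˣ) : ‖signVec ε‖ = √(Fintype.card κ) := by
  have habs (i : κ) : |((ε i : ℤ) : ℝ)| = 1 := by
    rcases Int.units_eq_one_or (ε i) with h | h <;> simp [h]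
  simp [EuclideanSpace.norm_eq, signVec, habs]

lemma expect_exp_inner_signVec_le [DecidableEq κ] (u : EuclideanSpace ℝ κ) :
    𝔼 ε : κ → ℤˣ, exp ⟪signVec ε, u⟫ ≤ exp (‖u‖ ^ 2 / 2) := by
  have hinner (ε : κ → ℤˣ) : ⟪signVec ε, u⟫ = ∑ i, ((ε i : ℤ) : ℝ) * u i := by
    simp [PiLp.inner_apply, signVec, mul_comm]
  have hcosh (y : ℝ) : 𝔼 b : ℤˣ, exp (((b : ℤ) : ℝ) * y) = cosh y := by
    rw [Fintype.expect_eq_sum_div_card, UnitsInt.univ]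
    simp [cosh_eq]
  calc 𝔼 ε : κ → ℤˣ, exp ⟪signVec ε, u⟫ = ∏ i, cosh (u i) := by
        simp only [hinner, exp_sum, expect_prod_pi fun i (b : ℤˣ) => exp (((b : ℤ) : ℝ) * u i),
          hcosh]
    _ ≤ ∏ i, exp (u i ^ 2 / 2) :=
        prod_le_prod (fun i _ => (cosh_pos _).le) fun i _ => cosh_le_exp_half_sq _
    _ = exp (‖u‖ ^ 2 / 2) := by
        rw [← exp_sum, ← sum_div, EuclideanSpace.real_norm_sq_eq]

lemma integral_exp_half_sq_gaussianReal :
    ∫ t, exp (t ^ 2 / 2) ∂gaussianReal 0 (1 / 2) = √2 := by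
  have hdensity (t : ℝ) :
      gaussianPDFReal 0 (1 / 2) t • exp (t ^ 2 / 2) = (√π)⁻¹ * exp (-(1 / 2) * t ^ 2) := by
    simp only [gaussianPDFReal, smul_eq_mul, mul_assoc, ← exp_add]
    push_cast
    ring_nf
  rw [integral_gaussianReal_eq_integral_smul (by norm_num)]
  simp only [hdensity]
  rw [integral_const_mul, integral_gaussian, sqrt_div pi_pos.le, div_eq_mul_inv,
    inv_mul_cancel_left₀ (sqrt_pos.2 pi_pos).ne', ← sqrt_inv]
  norm_num

-- `exp (y² / 4)` is the moment generating function at `y` of a centred Gaussian of variance `1/2`,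
-- so exchanging the two averages reduces the claim to the hypothesis on `Y`.
lemma expect_exp_sq_div_four_le {α : Type*} {s : Finset α} {Y : α → ℝ}
    (hY : ∀ t, 𝔼 a ∈ s, exp (t * Y a) ≤ exp (t ^ 2 / 2)) :
    𝔼 a ∈ s, exp (Y a ^ 2 / 4) ≤ √2 := by
  set γ := gaussianReal 0 (1 / 2)
  have hmgf (y : ℝ) : exp (y ^ 2 / 4) = ∫ t, exp (t * y) ∂γ := by
    have := congrFun (mgf_id_gaussianReal (μ := 0) (v := 1 / 2)) y
    simp only [mgf, id, mul_comm y] at this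
    rw [this]
    push_cast
    ring_nf
  have hint (a : α) : Integrable (fun t => exp (t * Y a)) γ := by
    simpa only [mul_comm] using integrable_exp_mul_gaussianReal (μ := 0) (v := 1 / 2) (Y a)
  calc 𝔼 a ∈ s, exp (Y a ^ 2 / 4) = ∫ t, 𝔼 a ∈ s, exp (t * Y a) ∂γ := by
        simp only [hmgf, expect_eq_sum_div_card]
        rw [integral_div, integral_finsetSum s fun a _ => hint a]
    _ ≤ ∫ t, exp (t ^ 2 / 2) ∂γ := by
        refine integral_mono ?_ (.of_integral_ne_zero ?_) hY
        · simp only [expect_eq_sum_div_card]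
          exact (integrable_finsetSum s fun a _ => hint a).div_const _
        · rw [integral_exp_half_sq_gaussianReal]
          positivity
    _ = √2 := integral_exp_half_sq_gaussianReal

lemma expect_exp_inner_signVec_sq_div_four_le [DecidableEq κ] {u : EuclideanSpace ℝ κ}
    (hu : ‖u‖ ≤ 1) : 𝔼 ε : κ → ℤˣ, exp (⟪signVec ε, u⟫ ^ 2 / 4) ≤ √2 := by
  refine expect_exp_sq_div_four_le fun t => ?_
  calc 𝔼 ε : κ → ℤˣ, exp (t * ⟪signVec ε, u⟫) = 𝔼 ε : κ → ℤˣ, exp ⟪signVec ε, t • u⟫ := by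
        simp only [real_inner_smul_right]
    _ ≤ exp (‖t • u‖ ^ 2 / 2) := expect_exp_inner_signVec_le _
    _ ≤ exp (t ^ 2 / 2) := by
        rw [norm_smul, mul_pow, norm_eq_abs, sq_abs]
        gcongr
        exact mul_le_of_le_one_right (sq_nonneg t) (pow_le_one₀ (norm_nonneg u) hu)

end Rademacher

section CappedPower

open Real Finset
open scoped RealInnerProductSpace

/-- The power `l |y| ^ s` capped at `y ^ 2 / 8`. The cap makes its exponential moments under
sub-Gaussian variables finite. -/
def cappedPow (l s y : ℝ) : ℝ := min (l * |y| ^ s) (y ^ 2 / 8)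

lemma abs_rpow_le_mul_exp {s : ℝ} (hs : 0 < s) (y : ℝ) :
    |y| ^ s ≤ (4 * s) ^ (s / 2) * exp (y ^ 2 / 8) := by
  calc |y| ^ s = (y ^ 2) ^ (s / 2) := by
        rw [← sq_abs, ← rpow_natCast, ← rpow_mul (abs_nonneg y)]
        push_cast
        ring_nf
    _ = (4 * s) ^ (s / 2) * (y ^ 2 / (4 * s)) ^ (s / 2) := by
        rw [← mul_rpow (by positivity) (by positivity)]
        field_simp
    _ ≤ (4 * s) ^ (s / 2) * exp (y ^ 2 / (4 * s)) ^ (s / 2) := by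
        gcongr
        linarith [add_one_le_exp (y ^ 2 / (4 * s))]
    _ = (4 * s) ^ (s / 2) * exp (y ^ 2 / 8) := by
        rw [← exp_mul]
        field_simp
        norm_num

lemma exp_cappedPow_le {l s : ℝ} (hl : 0 ≤ l) (hs : 0 < s) (y : ℝ) :
    exp (cappedPow l s y) ≤ 1 + l * (4 * s) ^ (s / 2) * exp (y ^ 2 / 4) := by
  have hexp (z : ℝ) : exp z ≤ 1 + z * exp z := by
    have := mul_le_mul_of_nonneg_right (one_sub_le_exp_neg z) (exp_pos z).le
    rw [← exp_add, neg_add_cancel, exp_zero] at this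
    linarith
  calc exp (cappedPow l s y) ≤ 1 + cappedPow l s y * exp (cappedPow l s y) := hexp _
    _ ≤ 1 + l * |y| ^ s * exp (y ^ 2 / 8) := by
        gcongr
        exacts [min_le_left _ _, min_le_right _ _]
    _ ≤ 1 + l * ((4 * s) ^ (s / 2) * exp (y ^ 2 / 8)) * exp (y ^ 2 / 8) := by
        gcongr
        exact abs_rpow_le_mul_exp hs y
    _ = 1 + l * (4 * s) ^ (s / 2) * exp (y ^ 2 / 4) := by
        rw [show y ^ 2 / 4 = y ^ 2 / 8 + y ^ 2 / 8 by ring, exp_add]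
        ring

lemma expect_exp_cappedPow_inner_signVec_le {κ : Type*} [Fintype κ] [DecidableEq κ]
    {l s : ℝ} (hl : 0 ≤ l) (hs : 0 < s) {u : EuclideanSpace ℝ κ} (hu : ‖u‖ ≤ 1) :
    𝔼 ε : κ → ℤˣ, exp (cappedPow l s ⟪signVec ε, u⟫) ≤ exp (2 * l * (4 * s) ^ (s / 2)) := by
  set C := l * (4 * s) ^ (s / 2)
  calc 𝔼 ε : κ → ℤˣ, exp (cappedPow l s ⟪signVec ε, u⟫)
      ≤ 𝔼 ε : κ → ℤˣ, (1 + C * exp (⟪signVec ε, u⟫ ^ 2 / 4)) :=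
        expect_le_expect fun ε _ => exp_cappedPow_le hl hs _
    _ = 1 + C * 𝔼 ε : κ → ℤˣ, exp (⟪signVec ε, u⟫ ^ 2 / 4) := by
        rw [expect_add_distrib, Fintype.expect_const, mul_expect]
    _ ≤ 1 + C * 2 := by
        gcongr
        exact (expect_exp_inner_signVec_sq_div_four_le hu).trans
          (sqrt_le_iff.2 ⟨by norm_num, by norm_num⟩)
    _ = 2 * l * (4 * s) ^ (s / 2) + 1 := by ring
    _ ≤ exp (2 * l * (4 * s) ^ (s / 2)) := add_one_le_exp _

lemma min_mul_rpow_le_cappedPow {s : ℝ} (hs : 2 ≤ s) (l : ℝ) {y M : ℝ} (hy : |y| ≤ M) :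
    min l (M ^ (2 - s) / 8) * |y| ^ s ≤ cappedPow l s y := by
  rcases eq_or_ne y 0 with rfl | hy0
  · simp [cappedPow, zero_rpow (by linarith : s ≠ 0)]
  have hpos : 0 < |y| := abs_pos.2 hy0
  refine le_min (by gcongr; exact min_le_left _ _) ?_
  calc min l (M ^ (2 - s) / 8) * |y| ^ s ≤ M ^ (2 - s) / 8 * |y| ^ s := by
        gcongr
        exact min_le_right _ _
    _ ≤ |y| ^ (2 - s) / 8 * |y| ^ s := by
        have := rpow_le_rpow_of_nonpos hpos hy (by linarith : 2 - s ≤ 0)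
        gcongr
    _ = y ^ 2 / 8 := by
        rw [div_mul_eq_mul_div, ← rpow_add hpos, sub_add_cancel, rpow_two, sq_abs]

-- With `M` the `ℓ_s` norm of `y`, every coordinate satisfies `|y j| ≤ M`, so the cap is active
-- somewhere only if `M ^ (2 - s) / 8 ≤ l`; then it bounds `M` by `√(8 * B)`.
lemma rpow_sum_le_max_of_sum_cappedPow_le {ι : Type*} [Fintype ι] {l s B : ℝ} (hl : 0 < l)
    (hs : 2 ≤ s) {y : ι → ℝ} (hB : ∑ j, cappedPow l s (y j) ≤ B) :
    (∑ j, |y j| ^ s) ^ (1 / s) ≤ max ((B / l) ^ (1 / s)) √(8 * B) := by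
  have hs0 : 0 < s := by linarith
  set M := (∑ j, |y j| ^ s) ^ (1 / s) with hM
  have hM0 : 0 ≤ M := by positivity
  have hMs : M ^ s = ∑ j, |y j| ^ s := by
    rw [hM, ← rpow_mul (by positivity), one_div_mul_cancel hs0.ne', rpow_one]
  have hyM (j : ι) : |y j| ≤ M := by
    rw [← rpow_le_rpow_iff (abs_nonneg _) hM0 hs0, hMs]
    exact single_le_sum (f := fun j => |y j| ^ s) (fun _ _ => by positivity) (mem_univ j)
  have hmin : min l (M ^ (2 - s) / 8) * M ^ s ≤ B := by
    rw [hMs, mul_sum]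
    exact (sum_le_sum fun j _ => min_mul_rpow_le_cappedPow hs l (hyM j)).trans hB
  rcases le_total l (M ^ (2 - s) / 8) with h | h
  · rw [min_eq_left h] at hmin
    have hle : M ^ s ≤ B / l := (le_div_iff₀' hl).2 hmin
    rw [one_div s]
    exact le_max_of_le_left <|
      (le_rpow_inv_iff_of_pos hM0 ((rpow_nonneg hM0 s).trans hle) hs0).2 hle
  · rw [min_eq_right h] at hmin
    refine le_max_of_le_right ?_
    rcases hM0.eq_or_lt with h0 | hpos
    · rw [← h0]
      positivity
    rw [div_mul_eq_mul_div, ← rpow_add hpos, sub_add_cancel, rpow_two] at hmin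
    exact le_sqrt_of_sq_le (by linarith)

end CappedPower

section RandomSelection

open Real Finset

lemma exists_forall_sum_le_log_card_add {α β ι : Type*} [Fintype α] [Nonempty α] [Fintype ι]
    {N : Finset β} {f : β → α → ℝ} {b : ℝ} (hf : ∀ c ∈ N, 𝔼 a, exp (f c a) ≤ exp b) :
    ∃ a : ι → α, ∀ c ∈ N, ∑ j, f c (a j) ≤ log #N + Fintype.card ι * b := by
  classical
  have hprod : ∀ c ∈ N, 𝔼 a : ι → α, exp (∑ j, f c (a j)) ≤ exp (Fintype.card ι * b) := by
    intro c hc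
    calc 𝔼 a : ι → α, exp (∑ j, f c (a j)) = ∏ _j : ι, 𝔼 a, exp (f c a) := by
          simp only [exp_sum, expect_prod_pi fun _ a => exp (f c a)]
      _ ≤ ∏ _j : ι, exp b := prod_le_prod (fun _ _ => by positivity) fun _ _ => hf c hc
      _ = exp (Fintype.card ι * b) := by rw [prod_const, card_univ, exp_nat_mul]
  have hsum : 𝔼 a : ι → α, ∑ c ∈ N, exp (∑ j, f c (a j)) ≤ #N * exp (Fintype.card ι * b) := by
    rw [expect_sum_comm, ← nsmul_eq_mul]
    exact sum_le_card_nsmul _ _ _ hprod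
  obtain ⟨a, -, ha⟩ := exists_le_of_expect_le univ_nonempty hsum
  refine ⟨a, fun c hc => ?_⟩
  have hcard : 0 < (#N : ℝ) := by exact_mod_cast card_pos.2 ⟨c, hc⟩
  rw [← exp_le_exp, exp_add, exp_log hcard]
  exact (single_le_sum (f := fun c => exp (∑ j, f c (a j))) (fun _ _ => by positivity) hc).trans ha

end RandomSelection

section Net

open Metric Module
open scoped RealInnerProductSpace

lemma packingNumber_half_closedBall_le (E : Type*) [NormedAddCommGroup E] [NormedSpace ℝ E]
    [FiniteDimensional ℝ E] :
    packingNumber (1 / 2) (closedBall (0 : E) 1) ≤ 5 ^ finrank ℝ E := by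
  classical
  refine iSup₂_le fun C hC => iSup_le fun hsep => ?_
  by_contra! hcard
  obtain ⟨D, hDC, hD⟩ := Set.exists_subset_encard_eq (Order.add_one_le_of_lt hcard)
  lift D to Finset E using
    Set.finite_of_encard_eq_coe (k := 5 ^ finrank ℝ E + 1) (by simpa using hD)
  have hscaled : (D.image fun c => (2 : ℝ) • c).card ≤ 5 ^ finrank ℝ E := by
    refine Besicovitch.card_le_of_separated _ ?_ ?_
    · simp only [Finset.forall_mem_image, norm_smul, Real.norm_ofNat]
      intro c hc
      linarith [mem_closedBall_zero_iff.1 (hC (hDC hc))]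
    · simp only [Finset.forall_mem_image, ← smul_sub, norm_smul, Real.norm_ofNat]
      intro c hc d hd hcd
      have hlt : ((1 / 2 : ℝ≥0) : ℝ≥0∞) < edist c d :=
        hsep (hDC hc) (hDC hd) fun h => hcd (congrArg _ h)
      have hdist : 1 / 2 < ‖c - d‖ := by
        rw [edist_dist, dist_eq_norm, ENNReal.lt_ofReal_iff_toReal_lt (by simp)] at hlt
        simpa using hlt
      linarith
  rw [Finset.card_image_of_injective _ (smul_right_injective E two_ne_zero)] at hscaled
  rw [Set.encard_coe_eq_coe_finsetCard] at hD
  norm_cast at hD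
  omega

lemma exists_finset_isCover_half_closedBall (E : Type*) [NormedAddCommGroup E] [NormedSpace ℝ E]
    [FiniteDimensional ℝ E] :
    ∃ N : Finset E, N.card ≤ 5 ^ finrank ℝ E ∧ (N : Set E) ⊆ closedBall 0 1 ∧
      IsCover (1 / 2) (closedBall (0 : E) 1) (N : Set E) := by
  have hcov : coveringNumber (1 / 2) (closedBall (0 : E) 1) ≤ 5 ^ finrank ℝ E :=
    (coveringNumber_le_packingNumber _ _).trans (packingNumber_half_closedBall_le E)
  have hfin := ne_top_of_le_ne_top (by simp) hcov
  have hmin := finite_minimalCover (ε := 1 / 2) (A := closedBall (0 : E) 1)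
  refine ⟨hmin.toFinset, ?_, ?_, ?_⟩
  · rw [← encard_minimalCover hfin, hmin.encard_eq_coe_toFinset_card] at hcov
    exact_mod_cast hcov
  · rw [hmin.coe_toFinset]
    exact minimalCover_subset
  · rw [hmin.coe_toFinset]
    exact isCover_minimalCover hfin

lemma norm_le_two_mul_of_isCover_half_closedBall {E : Type*} [NormedAddCommGroup E]
    [InnerProductSpace ℝ E] {N : Set E} (hN : IsCover (1 / 2) (closedBall (0 : E) 1) N)
    {v : E} {A : ℝ} (hA : ∀ c ∈ N, ⟪v, c⟫ ≤ A) : ‖v‖ ≤ 2 * A := by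
  have hu : ‖v‖⁻¹ • v ∈ closedBall (0 : E) 1 := by
    rw [mem_closedBall_zero_iff, norm_smul, norm_inv, norm_norm]
    exact inv_mul_le_one
  obtain ⟨c, hc, hdist⟩ := isCover_iff_subset_iUnion_closedBall.1 hN hu |> Set.mem_iUnion₂.1
  have hnorm : ⟪v, ‖v‖⁻¹ • v⟫ = ‖v‖ := by
    rw [real_inner_smul_right, real_inner_self_eq_norm_sq, sq, ← mul_assoc, inv_mul_mul_self]
  have hclose : ⟪v, ‖v‖⁻¹ • v - c⟫ ≤ ‖v‖ * (1 / 2) :=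
    (real_inner_le_norm _ _).trans <| by
      gcongr
      simpa [dist_eq_norm] using hdist
  rw [inner_sub_right, hnorm] at hclose
  linarith [hA c hc]

end Net

section SignOperator

open Real Finset Metric
open scoped RealInnerProductSpace

variable {ι κ : Type*} [Fintype ι] [Fintype κ]

/-- The operator `ℓ_∞ → ℓ_2` whose matrix has the sign vectors of `ε` as columns. -/
def signOperator (ε : ι → κ → ℤˣ) : PiLp ∞ (fun _ : ι => ℝ) →L[ℝ] EuclideanSpace ℝ κ :=
  ∑ j, (PiLp.proj ∞ (fun _ : ι => ℝ) j).smulRight (signVec (ε j))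

lemma signOperator_apply (ε : ι → κ → ℤˣ) (x : PiLp ∞ (fun _ : ι => ℝ)) :
    signOperator ε x = ∑ j, x j • signVec (ε j) := by
  simp [signOperator]

lemma norm_signOperator_single [DecidableEq ι] (ε : ι → κ → ℤˣ) (j : ι) :
    ‖signOperator ε (PiLp.single ∞ j 1)‖ = √(Fintype.card κ) := by
  simp [signOperator_apply, norm_signVec]

lemma log_natCast_le_two_mul_of_le_five_pow {k d : ℕ} (h : k ≤ 5 ^ d) : log k ≤ 2 * d := by
  rcases k.eq_zero_or_pos with rfl | hk
  · simp
  have hexp : 5 ≤ exp 2 := by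
    rw [← one_add_one_eq_two, exp_add]
    nlinarith [exp_one_gt_d9]
  rw [log_le_iff_le_exp (by exact_mod_cast hk), mul_comm, exp_nat_mul]
  calc (k : ℝ) ≤ 5 ^ d := by exact_mod_cast h
    _ ≤ exp 2 ^ d := by gcongr

-- The scale `l` makes the exponential moments of the capped powers contribute at most `card κ`
-- to the union bound, the same order as the logarithm of the size of `N`.
lemma exists_forall_rpow_sum_inner_signVec_le [Nonempty κ] {s : ℝ} (hs : 2 ≤ s)
    (hι : (Fintype.card ι : ℝ) ≤ (Fintype.card κ : ℝ) ^ (s / 2))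
    {N : Finset (EuclideanSpace ℝ κ)} (hcard : #N ≤ 5 ^ Fintype.card κ)
    (hN : (N : Set (EuclideanSpace ℝ κ)) ⊆ closedBall 0 1) :
    ∃ ε : ι → κ → ℤˣ, ∀ c ∈ N,
      (∑ j, |⟪signVec (ε j), c⟫| ^ s) ^ (1 / s) ≤ 5 * √(s * Fintype.card κ) := by
  classical
  have hs0 : 0 < s := by linarith
  have hn0 : 0 < (Fintype.card κ : ℝ) := by exact_mod_cast Fintype.card_pos
  set n := (Fintype.card κ : ℝ)
  set l := n / (2 * (4 * s * n) ^ (s / 2)) with hl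
  have hl0 : 0 < l := by positivity
  have hmean : Fintype.card ι * (2 * l * (4 * s) ^ (s / 2)) ≤ n := by
    calc Fintype.card ι * (2 * l * (4 * s) ^ (s / 2))
        ≤ n ^ (s / 2) * (2 * l * (4 * s) ^ (s / 2)) := by gcongr
      _ = n := by
        rw [hl, mul_rpow (by positivity) hn0.le]
        field_simp
  obtain ⟨ε, hε⟩ := exists_forall_sum_le_log_card_add (ι := ι)
    (f := fun c a => cappedPow l s ⟪signVec a, c⟫) fun c hc =>
      expect_exp_cappedPow_inner_signVec_le hl0.le hs0 (mem_closedBall_zero_iff.1 (hN hc))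
  refine ⟨ε, fun c hc => ?_⟩
  have hsum : ∑ j, cappedPow l s ⟪signVec (ε j), c⟫ ≤ 3 * n := by
    linarith [hε c hc, log_natCast_le_two_mul_of_le_five_pow hcard]
  refine (rpow_sum_le_max_of_sum_cappedPow_le hl0 hs hsum).trans (max_le ?_ ?_)
  · rw [one_div, rpow_inv_le_iff_of_pos (by positivity) (by positivity) hs0]
    calc 3 * n / l = 6 * (4 * s * n) ^ (s / 2) := by
          rw [hl]
          field_simp
          norm_num
      _ ≤ (25 / 4) ^ (s / 2) * (4 * s * n) ^ (s / 2) := by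
          gcongr
          exact (by norm_num : (6 : ℝ) ≤ 25 / 4).trans
            (self_le_rpow_of_one_le (by norm_num) (by linarith))
      _ = (5 * √(s * n)) ^ s := by
          rw [← mul_rpow (by positivity) (by positivity), rpow_div_two_eq_sqrt _ (by positivity),
            show 25 / 4 * (4 * s * n) = 5 ^ 2 * (s * n) by ring, sqrt_mul (by positivity),
            sqrt_sq (by norm_num)]
  · rw [sqrt_le_left (by positivity), mul_pow, sq_sqrt (by positivity)]
    nlinarith

lemma exists_forall_norm_signOperator_le [Nonempty κ] {r s : ℝ} (hrs : r.HolderConjugate s)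
    (hs : 2 ≤ s) (hι : (Fintype.card ι : ℝ) ≤ (Fintype.card κ : ℝ) ^ (s / 2)) :
    ∃ ε : ι → κ → ℤˣ, ∀ x, ‖signOperator ε x‖ ≤
      10 * √(s * Fintype.card κ) * (∑ j, |x j| ^ r) ^ (1 / r) := by
  obtain ⟨N, hcard, hball, hcover⟩ := exists_finset_isCover_half_closedBall (EuclideanSpace ℝ κ)
  rw [finrank_euclideanSpace] at hcard
  obtain ⟨ε, hε⟩ := exists_forall_rpow_sum_inner_signVec_le hs hι hcard hball
  refine ⟨ε, fun x => ?_⟩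
  have hinner : ∀ c ∈ N, ⟪signOperator ε x, c⟫ ≤
      (∑ j, |x j| ^ r) ^ (1 / r) * (5 * √(s * Fintype.card κ)) := by
    intro c hc
    calc ⟪signOperator ε x, c⟫ = ∑ j, x j * ⟪signVec (ε j), c⟫ := by
          simp only [signOperator_apply, sum_inner, real_inner_smul_left]
      _ ≤ (∑ j, |x j| ^ r) ^ (1 / r) * (∑ j, |⟪signVec (ε j), c⟫| ^ s) ^ (1 / s) :=
          inner_le_Lp_mul_Lq _ _ _ hrs
      _ ≤ (∑ j, |x j| ^ r) ^ (1 / r) * (5 * √(s * Fintype.card κ)) := by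
          gcongr
          exact hε c hc
  linarith [norm_le_two_mul_of_isCover_half_closedBall hcover hinner]

end SignOperator

section SummingNorm

open Real Finset

lemma eSum_ofReal {ι : Type*} [Fintype ι] {p : ℝ} (hp : 0 < p) {f : ι → ℝ} (hf : ∀ i, 0 ≤ f i) :
    eSum (ENNReal.ofReal p) (fun i => ENNReal.ofReal (f i)) =
      ENNReal.ofReal ((∑ i, f i ^ p) ^ (1 / p)) := by
  simp only [eSum, ENNReal.ofReal_ne_top, if_false, ENNReal.toReal_ofReal hp.le,
    ENNReal.ofReal_rpow_of_nonneg (hf _) hp.le]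
  rw [← ENNReal.ofReal_sum_of_nonneg fun i _ => rpow_nonneg (hf i) p,
    ENNReal.ofReal_rpow_of_nonneg (sum_nonneg fun i _ => rpow_nonneg (hf i) p) (by positivity)]

lemma sum_abs_apply_single_le_norm {ι : Type*} [Fintype ι] [DecidableEq ι]
    (f : PiLp ∞ (fun _ : ι => ℝ) →L[ℝ] ℝ) : ∑ j, |f (PiLp.single ∞ j 1)| ≤ ‖f‖ := by
  set w : PiLp ∞ (fun _ : ι => ℝ) :=
    WithLp.toLp ∞ fun j => (SignType.sign (f (PiLp.single ∞ j 1)) : ℝ) with hw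
  have hnorm : ‖w‖ ≤ 1 := by
    rw [PiLp.norm_eq_ciSup]
    refine Real.iSup_le (fun j => ?_) zero_le_one
    rcases (SignType.sign (f (PiLp.single ∞ j 1))).trichotomy with h | h | h <;> simp [hw, h]
  have hsum : w = ∑ j, w j • PiLp.single ∞ j 1 := by
    ext i
    simp [Pi.single_apply]
  calc ∑ j, |f (PiLp.single ∞ j 1)| = f w := by
        rw [hsum, map_sum]
        refine sum_congr rfl fun j _ => ?_
        rw [map_smul, smul_eq_mul]
        exact (sign_mul_self _).symm
    _ ≤ ‖f‖ * ‖w‖ := (le_abs_self _).trans (f.le_opNorm w)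
    _ ≤ ‖f‖ := mul_le_of_le_one_right (norm_nonneg f) hnorm

lemma weakLq_one_single_le (m : ℕ) :
    weakLq 1 (fun j => PiLp.single ∞ j 1 : Fin m → PiLp ∞ (fun _ : Fin m => ℝ)) ≤ 1 := by
  refine iSup_le fun f => ?_
  rw [← ENNReal.ofReal_one, eSum_ofReal one_pos fun _ => abs_nonneg _]
  simp only [rpow_one, div_one]
  exact ENNReal.ofReal_le_ofReal ((sum_abs_apply_single_le_norm f.1).trans f.2)

lemma ofReal_rpow_sum_norm_apply_single_le_piPQ {Y : Type*} [NormedAddCommGroup Y]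
    [NormedSpace ℝ Y] {p : ℝ} (hp : 0 < p) {m : ℕ} (T : PiLp ∞ (fun _ : Fin m => ℝ) →L[ℝ] Y) :
    ENNReal.ofReal ((∑ j, ‖T (PiLp.single ∞ j 1)‖ ^ p) ^ (1 / p)) ≤
      piPQ (ENNReal.ofReal p) 1 T := by
  rw [← eSum_ofReal hp fun _ => norm_nonneg _]
  exact le_iSup_of_le m (le_iSup_of_le ⟨_, weakLq_one_single_le m⟩ le_rfl)

lemma sum_abs_rpow_apply_le_one_of_weakLq_le_one {X : Type*} [NormedAddCommGroup X]
    [NormedSpace ℝ X] {p : ℝ} (hp : 0 < p) {k : ℕ} {x : Fin k → X}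
    (hx : weakLq (ENNReal.ofReal p) x ≤ 1) {f : X →L[ℝ] ℝ} (hf : ‖f‖ ≤ 1) :
    ∑ i, |f (x i)| ^ p ≤ 1 := by
  have hfx : eSum (ENNReal.ofReal p) (fun i => ENNReal.ofReal |f (x i)|) ≤ 1 :=
    (le_iSup (fun f : {f : X →L[ℝ] ℝ // ‖f‖ ≤ 1} =>
      eSum (ENNReal.ofReal p) fun i => ENNReal.ofReal |f.1 (x i)|) ⟨f, hf⟩).trans hx
  rwa [eSum_ofReal hp fun _ => abs_nonneg _, ENNReal.ofReal_le_one, one_div,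
    rpow_inv_le_iff_of_pos (by positivity) zero_le_one hp, one_rpow] at hfx

lemma norm_proj_infty_le_one {ι : Type*} [Fintype ι] (j : ι) :
    ‖(PiLp.proj ∞ (fun _ : ι => ℝ) j : PiLp ∞ (fun _ : ι => ℝ) →L[ℝ] ℝ)‖ ≤ 1 := by
  refine ContinuousLinearMap.opNorm_le_bound _ zero_le_one fun y => ?_
  rw [one_mul]
  exact PiLp.norm_apply_le y j

lemma sum_abs_rpow_le_one_of_exponent_le {ι : Type*} [Fintype ι] {p r : ℝ} (hp : 0 < p)
    (hpr : p ≤ r) {y : ι → ℝ} (hy : ∑ i, |y i| ^ p ≤ 1) : ∑ i, |y i| ^ r ≤ 1 := by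
  refine (sum_le_sum fun i _ => ?_).trans hy
  have hle : |y i| ^ p ≤ 1 ^ p := by
    rw [one_rpow]
    exact (single_le_sum (f := fun i => |y i| ^ p) (fun _ _ => by positivity) (mem_univ i)).trans hy
  exact rpow_le_rpow_of_exponent_ge_of_imp (abs_nonneg _)
    ((rpow_le_rpow_iff (abs_nonneg _) zero_le_one hp).1 hle) hpr fun _ h => by linarith

lemma rpow_sum_rpow_le_card_rpow_mul {ι : Type*} [Fintype ι] {p r : ℝ} (hp : 0 < p) (hpr : p ≤ r)
    {t : ι → ℝ} (ht : ∀ i, 0 ≤ t i) :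
    (∑ i, t i ^ p) ^ (1 / p) ≤
      (Fintype.card ι : ℝ) ^ (1 / p - 1 / r) * (∑ i, t i ^ r) ^ (1 / r) := by
  have hr : 0 < r := hp.trans_le hpr
  have hnonneg (a : ℝ) : 0 ≤ ∑ i, t i ^ a := sum_nonneg fun i _ => rpow_nonneg (ht i) a
  have hmean : (∑ i, t i ^ p) ^ (r / p) ≤
      (Fintype.card ι : ℝ) ^ (r / p - 1) * ∑ i, t i ^ r := by
    have := rpow_sum_le_const_mul_sum_rpow_of_nonneg (s := univ) (f := fun i => t i ^ p)
      ((one_le_div hp).2 hpr) fun i _ => rpow_nonneg (ht i) p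
    simpa only [card_univ, ← rpow_mul (ht _), mul_div_cancel₀ r hp.ne'] using this
  calc (∑ i, t i ^ p) ^ (1 / p) = ((∑ i, t i ^ p) ^ (r / p)) ^ (1 / r) := by
        rw [← rpow_mul (hnonneg p)]
        field_simp
    _ ≤ ((Fintype.card ι : ℝ) ^ (r / p - 1) * ∑ i, t i ^ r) ^ (1 / r) := by
        have := rpow_nonneg (hnonneg p) (r / p)
        gcongr
    _ = (Fintype.card ι : ℝ) ^ (1 / p - 1 / r) * (∑ i, t i ^ r) ^ (1 / r) := by
        rw [mul_rpow (by positivity) (hnonneg r), ← rpow_mul (by positivity)]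
        field_simp

lemma piN_le_of_forall_norm_le {Y : Type*} [NormedAddCommGroup Y] [NormedSpace ℝ Y]
    {ι : Type*} [Fintype ι] {p r K : ℝ} (hp : 0 < p) (hpr : p ≤ r) (hK : 0 ≤ K)
    {T : PiLp ∞ (fun _ : ι => ℝ) →L[ℝ] Y}
    (hT : ∀ x, ‖T x‖ ≤ K * (∑ j, |x j| ^ r) ^ (1 / r)) (k : ℕ) :
    piN (ENNReal.ofReal p) (ENNReal.ofReal p) k T ≤
      ENNReal.ofReal ((k : ℝ) ^ (1 / p - 1 / r) * (K * (Fintype.card ι : ℝ) ^ (1 / r))) := by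
  have hr : 0 < r := hp.trans_le hpr
  refine iSup_le fun ⟨x, hx⟩ => ?_
  have hcoord (j : ι) : ∑ i, |x i j| ^ r ≤ 1 :=
    sum_abs_rpow_le_one_of_exponent_le hp hpr <|
      sum_abs_rpow_apply_le_one_of_weakLq_le_one hp hx (norm_proj_infty_le_one j)
  have hsum : ∑ i, ‖T (x i)‖ ^ r ≤ (K * (Fintype.card ι : ℝ) ^ (1 / r)) ^ r := by
    calc ∑ i, ‖T (x i)‖ ^ r ≤ ∑ i, (K * (∑ j, |x i j| ^ r) ^ (1 / r)) ^ r := by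
          gcongr with i
          exact hT (x i)
      _ = K ^ r * ∑ j, ∑ i, |x i j| ^ r := by
          rw [sum_comm, mul_sum]
          refine sum_congr rfl fun i _ => ?_
          rw [mul_rpow hK (by positivity), one_div, rpow_inv_rpow (by positivity) hr.ne']
      _ ≤ K ^ r * ∑ _j : ι, 1 := by
          gcongr with j
          exact hcoord j
      _ = (K * (Fintype.card ι : ℝ) ^ (1 / r)) ^ r := by
          rw [mul_rpow hK (by positivity), one_div, rpow_inv_rpow (by positivity) hr.ne']
          simp
  rw [eSum_ofReal hp fun _ => norm_nonneg _]
  refine ENNReal.ofReal_le_ofReal ?_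
  calc (∑ i, ‖T (x i)‖ ^ p) ^ (1 / p)
      ≤ (k : ℝ) ^ (1 / p - 1 / r) * (∑ i, ‖T (x i)‖ ^ r) ^ (1 / r) := by
        simpa using rpow_sum_rpow_le_card_rpow_mul hp hpr fun i => norm_nonneg (T (x i))
    _ ≤ (k : ℝ) ^ (1 / p - 1 / r) * (K * (Fintype.card ι : ℝ) ^ (1 / r)) := by
        gcongr
        rw [one_div r]
        exact (rpow_inv_le_iff_of_pos (by positivity) (by positivity) hr).2 (by rwa [← one_div])

end SummingNorm

section Comparison

open Real

lemma ofReal_rpow_mul_sqrt_le_piPQ_signOperator {κ : Type*} [Fintype κ] {p : ℝ} (hp : 0 < p)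
    {m : ℕ} (ε : Fin m → κ → ℤˣ) :
    ENNReal.ofReal ((m : ℝ) ^ (1 / p) * √(Fintype.card κ)) ≤
      piPQ (ENNReal.ofReal p) 1 (signOperator ε) := by
  have hunit := ofReal_rpow_sum_norm_apply_single_le_piPQ hp (signOperator ε)
  simp only [norm_signOperator_single, Finset.sum_const, Finset.card_univ, Fintype.card_fin,
    nsmul_eq_mul] at hunit
  rwa [mul_rpow (by positivity) (by positivity), one_div, rpow_rpow_inv (by positivity) hp.ne',
    ← one_div] at hunit

lemma exists_forall_piN_le_mul_piPQ {κ : Type*} [Fintype κ] [Nonempty κ] {s : ℝ} (hs : 2 ≤ s)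
    {m : ℕ} (hm : 0 < m) (hmκ : (m : ℝ) ≤ (Fintype.card κ : ℝ) ^ (s / 2)) :
    ∃ T : PiLp ∞ (fun _ : Fin m => ℝ) →L[ℝ] EuclideanSpace ℝ κ,
      ∀ p, 0 < p → 1 - 1 / p ≤ 1 / s →
        0 < piPQ (ENNReal.ofReal p) 1 T ∧
        ∀ k : ℕ, piN (ENNReal.ofReal p) (ENNReal.ofReal p) k T ≤
          ENNReal.ofReal (10 * √s * ((k : ℝ) / m) ^ (1 / s - (1 - 1 / p))) *
            piPQ (ENNReal.ofReal p) 1 T := by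
  have hm0 : (0 : ℝ) < m := by exact_mod_cast hm
  have hrs : (conjExponent s).HolderConjugate s := (HolderConjugate.conjExponent (by linarith)).symm
  set r := conjExponent s
  obtain ⟨ε, hε⟩ := exists_forall_norm_signOperator_le (ι := Fin m) hrs hs (by simpa using hmκ)
  refine ⟨signOperator ε, fun p hp hps => ?_⟩
  have hr : 1 / r = 1 - 1 / s := by simpa using hrs.symm.one_sub_inv.symm
  have hpr : p ≤ r := (one_div_le_one_div hrs.pos hp).1 (by linarith)
  have hlower := ofReal_rpow_mul_sqrt_le_piPQ_signOperator hp ε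
  refine ⟨(ENNReal.ofReal_pos.2 (by positivity)).trans_le hlower, fun k => ?_⟩
  set θ := 1 / s - (1 - 1 / p)
  have hθ : 1 / p - 1 / r = θ := by linarith
  have hscale : (k : ℝ) ^ θ * (10 * √(s * Fintype.card κ) * (m : ℝ) ^ (1 / r)) =
      10 * √s * ((k : ℝ) / m) ^ θ * ((m : ℝ) ^ (1 / p) * √(Fintype.card κ)) := by
    rw [show 1 / p = θ + 1 / r by linarith, rpow_add hm0, div_rpow (by positivity) hm0.le,
      sqrt_mul (by linarith)]
    field_simp
  calc piN (ENNReal.ofReal p) (ENNReal.ofReal p) k (signOperator ε)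
      ≤ ENNReal.ofReal
          ((k : ℝ) ^ θ * (10 * √(s * Fintype.card κ) * (m : ℝ) ^ (1 / r))) := by
        simpa only [hθ, Fintype.card_fin] using
          piN_le_of_forall_norm_le hp hpr (by positivity) hε k
    _ = ENNReal.ofReal (10 * √s * ((k : ℝ) / m) ^ θ) *
          ENNReal.ofReal ((m : ℝ) ^ (1 / p) * √(Fintype.card κ)) := by
        rw [hscale, ENNReal.ofReal_mul (by positivity)]
    _ ≤ ENNReal.ofReal (10 * √s * ((k : ℝ) / m) ^ θ) *
          piPQ (ENNReal.ofReal p) 1 (signOperator ε) := by gcongr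

lemma toReal_one_div_eq_one_sub {p : ℝ} (hp : 0 < p) {p' : ℝ≥0∞}
    (h : 1 / ENNReal.ofReal p + 1 / p' = 1) : (1 / p').toReal = 1 - 1 / p := by
  have hfin : 1 / p' ≠ ∞ := ne_top_of_le_ne_top ENNReal.one_ne_top (le_add_self.trans h.le)
  have hreal := congrArg ENNReal.toReal h
  rw [ENNReal.toReal_add (by simpa) hfin, ENNReal.toReal_div, ENNReal.toReal_one,
    ENNReal.toReal_ofReal hp.le] at hreal
  linarith

lemma toReal_one_div_le_one_div {s : ℝ} (hs : 0 < s) {q : ℝ≥0∞} (h : ENNReal.ofReal s ≤ q) :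
    (1 / q).toReal ≤ 1 / s := by
  refine ENNReal.toReal_le_of_le_ofReal (by positivity) ?_
  rw [one_div s, ENNReal.ofReal_inv_of_pos hs, one_div]
  exact ENNReal.inv_le_inv.2 h

lemma div_floor_rpow_le_two_mul {x a θ : ℝ} (hx : 0 ≤ x) (ha : 1 ≤ a) (hθ0 : 0 ≤ θ) (hθ1 : θ ≤ 1) :
    (x / ⌊a⌋₊) ^ θ ≤ 2 * (x / a) ^ θ := by
  have hfloor : (1 : ℝ) ≤ ⌊a⌋₊ := by exact_mod_cast Nat.floor_pos.2 ha
  have hle : a ≤ 2 * ⌊a⌋₊ := by linarith [Nat.lt_floor_add_one a]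
  calc (x / ⌊a⌋₊) ^ θ ≤ (2 * (x / a)) ^ θ := by
        refine rpow_le_rpow (by positivity) ?_ hθ0
        rw [mul_div_assoc', div_le_div_iff₀ (by linarith) (by linarith)]
        linarith [mul_le_mul_of_nonneg_left hle hx]
    _ = 2 ^ θ * (x / a) ^ θ := mul_rpow zero_le_two (by positivity)
    _ ≤ 2 * (x / a) ^ θ := by
        gcongr
        exact rpow_le_self_of_one_le one_le_two hθ1

end Comparison

theorem statement18_general :
    ∃ c₀ : ℝ, 0 < c₀ ∧
      ∀ s : ℝ, 2 ≤ s → ∀ n : ℕ, 0 < n →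
        ∃ T : PiLp ∞ (fun _ : Fin ⌊(n : ℝ) ^ (s / 2)⌋₊ => ℝ) →L[ℝ] EuclideanSpace ℝ (Fin n),
          ∀ (p : ℝ) (p' : ℝ≥0∞), 1 ≤ p → 1 / ENNReal.ofReal p + 1 / p' = 1 →
            ENNReal.ofReal s ≤ p' →
            0 < piPQ (ENNReal.ofReal p) 1 T ∧
            ∀ k : ℕ,
              piN (ENNReal.ofReal p) (ENNReal.ofReal p) k T ≤
                ENNReal.ofReal (c₀ * Real.sqrt s *
                    ((k : ℝ) / (n : ℝ) ^ (s / 2)) ^ (1 / s - (1 / p').toReal)) *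
                  piPQ (ENNReal.ofReal p) 1 T := by
  refine ⟨20, by norm_num, fun s hs n hn => ?_⟩
  have : NeZero n := ⟨hn.ne'⟩
  have hM : 1 ≤ (n : ℝ) ^ (s / 2) := Real.one_le_rpow (by exact_mod_cast hn) (by linarith)
  set M := (n : ℝ) ^ (s / 2)
  have hm : 0 < ⌊M⌋₊ := Nat.floor_pos.2 hM
  obtain ⟨T, hT⟩ := exists_forall_piN_le_mul_piPQ (κ := Fin n) hs hm
    (by simpa using Nat.floor_le (zero_le_one.trans hM))
  refine ⟨T, fun p p' hp hpp' hsp' => ?_⟩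
  have hp' := toReal_one_div_eq_one_sub (zero_lt_one.trans_le hp) hpp'
  have hθ := toReal_one_div_le_one_div (by linarith) hsp'
  obtain ⟨hpos, hle⟩ := hT p (zero_lt_one.trans_le hp) (hp' ▸ hθ)
  refine ⟨hpos, fun k => (hle k).trans ?_⟩
  have hs1 : 1 / s ≤ 1 := (div_le_one (by linarith)).2 (by linarith)
  have hfloor := div_floor_rpow_le_two_mul k.cast_nonneg hM (sub_nonneg.2 hθ)
    (by linarith [ENNReal.toReal_nonneg (a := 1 / p')])
  rw [← hp', show 20 * √s = 10 * √s * 2 by ring, mul_assoc _ 2]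
  gcongr

/-- for `1 ≤ p < 2 ≤ s < p' ≤ ∞` (`p'` the conjugate exponent of
`p`), there is an absolute constant `c₀` such that for every `n ≥ 1` there is an
operator `T : ℓ_∞^{⌊n^{s/2}⌋} → ℓ_2^n` with `π_{p,1}(T) > 0` and
`π_p^k(T) ≤ c₀ √s (k/n^{s/2})^{1/s - 1/p'} π_{p,1}(T)` for all `k`. -/
theorem statement18 :
    ∃ c₀ : ℝ, 0 < c₀ ∧
      ∀ (p s : ℝ) (p' : ℝ≥0∞), 1 ≤ p → p < 2 → 2 ≤ s →
        1 / ENNReal.ofReal p + 1 / p' = 1 → ENNReal.ofReal s < p' →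
        ∀ n : ℕ, 0 < n →
          ∃ T : PiLp ∞ (fun _ : Fin ⌊(n : ℝ) ^ (s / 2)⌋₊ => ℝ) →L[ℝ]
              EuclideanSpace ℝ (Fin n),
            0 < piPQ (ENNReal.ofReal p) 1 T ∧
            ∀ k : ℕ,
              piN (ENNReal.ofReal p) (ENNReal.ofReal p) k T ≤
                ENNReal.ofReal (c₀ * Real.sqrt s *
                    ((k : ℝ) / (n : ℝ) ^ (s / 2)) ^ (1 / s - (1 / p').toReal)) *
                  piPQ (ENNReal.ofReal p) 1 T := by
  obtain ⟨c₀, hc₀, h⟩ := statement18_general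
  exact ⟨c₀, hc₀, fun p s p' hp _ hs hpp' hsp' n hn =>
    (h s hs n hn).imp fun _ hT => hT p p' hp hpp' hsp'.le⟩

end
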